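/- For all real q, ρ with |q| < 1 and |ρ| < 1, and all x, y ∈ S(q), the series Σ_{n=0}^∞ (ρⁿ/((ρ²;q)_n·[n]_q!))·B_n(y|q)·P_n(x|y,ρ,q) converges and equals the reciprocal of Σ_{n=0}^∞ (ρⁿ/[n]_q!)·H_n(x|q)·H_n(y|q); in particular the latter sum is nonzero. -/

import Mathlib

noncomputable section

open Finset

/-- The q-integer `[n]_q = 1 + q + ⋯ + q^{n-1}`. -/
def qInt (q : ℝ) (n : ℕ) : ℝ := ∑ i ∈ Finset.range n, q ^ i

/-- The q-factorial `[n]_q!`. -/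
def qFact (q : ℝ) (n : ℕ) : ℝ := ∏ j ∈ Finset.range n, qInt q (j + 1)

/-- The q-binomial coefficient. -/
def qBinom (q : ℝ) (n k : ℕ) : ℝ :=
  if k ≤ n then qFact q n / (qFact q (n - k) * qFact q k) else 0

/-- The finite q-Pochhammer symbol `(a;q)_n`. -/
def qPoch (a q : ℝ) (n : ℕ) : ℝ := ∏ j ∈ Finset.range n, (1 - a * q ^ j)

/-- The infinite q-Pochhammer symbol `(a;q)_∞`. -/
def qPochInf (a q : ℝ) : ℝ := ∏' j : ℕ, (1 - a * q ^ j)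

/-- The q-Hermite polynomials `H_n(x|q)`. -/
def qHermite (q : ℝ) : ℕ → ℝ → ℝ
  | 0, _ => 1
  | 1, x => x
  | n + 2, x => x * qHermite q (n + 1) x - qInt q (n + 1) * qHermite q n x

/-- The rescaled q-ultraspherical polynomials `R_n(x|β,q)`. -/
def qUltra (q β : ℝ) : ℕ → ℝ → ℝ
  | 0, _ => 1
  | 1, x => (1 - β) * x
  | n + 2, x => (1 - β * q ^ (n + 1)) * x * qUltra q β (n + 1) x
      - (1 - β ^ 2 * q ^ n) * qInt q (n + 1) * qUltra q β n x

/-- The Al-Salam–Chihara polynomials `P_n(x|y,ρ,q)`. -/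
def ASC (q y ρ : ℝ) : ℕ → ℝ → ℝ
  | 0, _ => 1
  | 1, x => x - ρ * y
  | n + 2, x => (x - ρ * y * q ^ (n + 1)) * ASC q y ρ (n + 1) x
      - (1 - ρ ^ 2 * q ^ n) * qInt q (n + 1) * ASC q y ρ n x

/-- The polynomials `B_n(y|q)` (q⁻¹-Hermite related). -/
def qB (q : ℝ) : ℕ → ℝ → ℝ
  | 0, _ => 1
  | 1, y => -y
  | n + 2, y => -q ^ (n + 1) * y * qB q (n + 1) y + q ^ n * qInt q (n + 1) * qB q n y

/-- The big q-Hermite polynomials `H_n(x|a,q)`. -/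
def bigqHermite (q a : ℝ) : ℕ → ℝ → ℝ
  | 0, _ => 1
  | 1, x => x - a
  | n + 2, x => (x - a * q ^ (n + 1)) * bigqHermite q a (n + 1) x
      - qInt q (n + 1) * bigqHermite q a n x

/-- The probabilistic Hermite polynomials `H_n(x)`. -/
def probHermite : ℕ → ℝ → ℝ
  | 0, _ => 1
  | 1, x => x
  | n + 2, x => x * probHermite (n + 1) x - (n + 1) * probHermite n x

/-- The probabilistic Hermite polynomials on ℂ. -/
def probHermiteC : ℕ → ℂ → ℂ
  | 0, _ => 1
  | 1, x => x
  | n + 2, x => x * probHermiteC (n + 1) x - (n + 1) * probHermiteC n x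

/-- The Chebyshev polynomials of the second kind. -/
def chebU : ℕ → ℝ → ℝ
  | 0, _ => 1
  | 1, x => 2 * x
  | n + 2, x => 2 * x * chebU (n + 1) x - chebU n x

/-- The Chebyshev polynomials of the first kind. -/
def chebT : ℕ → ℝ → ℝ
  | 0, _ => 1
  | 1, x => x
  | n + 2, x => 2 * x * chebT (n + 1) x - chebT n x

/-- `W_k(x,y,t|q)`. -/
def Wk (q x y t : ℝ) (k : ℕ) : ℝ :=
  (1 - t ^ 2 * q ^ (2 * k)) ^ 2 - (1 - q) * x * y * t * q ^ k * (1 + t ^ 2 * q ^ (2 * k))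
    + (1 - q) * t ^ 2 * q ^ (2 * k) * (x ^ 2 + y ^ 2)

/-- `V_k(x,a|q)`. -/
def Vk (q x a : ℝ) (k : ℕ) : ℝ :=
  1 - (1 - q) * a * x * q ^ k + (1 - q) * a ^ 2 * q ^ (2 * k)

/-- `L_k(x,a|q)`. -/
def Lk (q x a : ℝ) (k : ℕ) : ℝ :=
  (1 + a * q ^ k) ^ 2 - (1 - q) * x ^ 2 * a ^ 2 * q ^ k

/-- The support interval `S(q) = [-2/√(1-q), 2/√(1-q)]` for `|q| < 1`. -/
def Sq (q : ℝ) : Set ℝ := Set.Icc (-(2 / Real.sqrt (1 - q))) (2 / Real.sqrt (1 - q))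

/-!
Let `h(t) = ∑ Hₙ(y|q) tⁿ / [n]_q!` and `b(t) = ∑ Bₙ(y|q) tⁿ / [n]_q!`. With
`V(t) = 1 - (1 - q) y t + (1 - q) t²`, the three-term recurrences say exactly that
`h(qt) = V(t) h(t)` and `b(t) = V(t) b(qt)`. Hence `b h` is invariant under `t ↦ qt`, so it is the
constant `1`.

By Carlitz, the shifted Poisson–Mehler sums `Kₘ = ∑ₙ ρⁿ / [n]_q! Hₙ(y|q) Hₘ₊ₙ(x|q)` satisfy
`(ρ²;q)ₘ Kₘ = K₀ Pₘ(x|y,ρ,q)`. Therefore `K₀` times the series to be summed is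
`∑ₘ ρᵐ / [m]_q! Bₘ(y|q) Kₘ = ∑_N ρᴺ H_N(x|q) [tᴺ] (b(t) h(t)) = H₀(x|q) = 1`.

Absolute convergence of the double series follows from the limits of the coefficients in the
recurrences: on `S(q)` the limiting recurrence of `Hₙ` has two conjugate characteristic roots of
modulus `1 / √(1 - q)`, that of `Bₙ` has the double root `0`, and `1 / [n]_q!` decays like
`(1 - q)ⁿ`.
-/

open Filter Asymptotics PowerSeries
open scoped Topology ComplexConjugate

section GrowthRate

/-- `u` has exponential growth rate at most `c`, that is `limsup ‖u n‖ ^ (1 / n) ≤ c`. The bound is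
required for every rate above `c`, not for `c` itself, so that polynomial factors are free. -/
structure GrowthRateLE {E : Type*} [Norm E] (u : ℕ → E) (c : ℝ) : Prop where
  nonneg : 0 ≤ c
  isBigO : ∀ ⦃r : ℝ⦄, c < r → u =O[atTop] fun n => r ^ n

theorem isBigO_pow_of_eventually_norm_succ_le {E : Type*} [SeminormedAddCommGroup E] {u : ℕ → E}
    {r : ℝ} (hr : 0 < r) (h : ∀ᶠ n in atTop, ‖u (n + 1)‖ ≤ r * ‖u n‖) :
    u =O[atTop] fun n => r ^ n := by
  obtain ⟨N, hN⟩ := eventually_atTop.mp h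
  refine .of_bound (‖u N‖ / r ^ N) ((eventually_ge_atTop N).mono fun n hn => ?_)
  obtain ⟨k, rfl⟩ := Nat.exists_eq_add_of_le hn
  calc ‖u (N + k)‖ ≤ r ^ k * ‖u N‖ :=
        le_geom (u := fun i => ‖u (N + i)‖) hr.le k fun i _ => hN (N + i) (Nat.le_add_right N i)
    _ = ‖u N‖ / r ^ N * ‖r ^ (N + k)‖ := by
        rw [Real.norm_of_nonneg (by positivity), pow_add]
        field_simp

theorem isBigO_pow_of_coupled_le {u v d e : ℕ → ℝ} {c r : ℝ} (hu : ∀ n, 0 ≤ u n)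
    (hv : ∀ n, 0 ≤ v n) (hc : 0 ≤ c) (hcr : c < r) (hd : Tendsto d atTop (𝓝 0))
    (he : Tendsto e atTop (𝓝 0)) (hu_succ : ∀ n, u (n + 1) ≤ v n + c * u n)
    (hv_succ : ∀ n, v (n + 1) ≤ c * v n + d n * u (n + 1) + e n * u n) :
    u =O[atTop] fun n => r ^ n := by
  set ε := (r - c) / 2 with hε
  have hε0 : 0 < ε := by linarith
  obtain ⟨δ, hδ0, hδε, hδc⟩ : ∃ δ > 0, δ ≤ ε ∧ δ * (c + 1) ≤ ε * (r - c) := by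
    have : 0 < r - c := by linarith
    exact ⟨min ε (ε * (r - c) / (c + 1)), by positivity, min_le_left _ _,
      (le_div_iff₀ (by positivity)).mp (min_le_right _ _)⟩
  -- The weight `ε` makes `v + ε u` contract at the rate `r`, although `v` enters `u` undamped.
  have hsum : (fun n => v n + ε * u n) =O[atTop] fun n => r ^ n := by
    refine isBigO_pow_of_eventually_norm_succ_le (hc.trans_lt hcr) ?_
    filter_upwards [hd.eventually_le_const hδ0, he.eventually_le_const hδ0] with n hdn hen
    have := hu n
    have := hv n
    have := hu (n + 1)
    have := hv (n + 1)
    rw [Real.norm_of_nonneg (by positivity), Real.norm_of_nonneg (by positivity)]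
    calc v (n + 1) + ε * u (n + 1)
        ≤ c * v n + δ * (v n + c * u n) + δ * u n + ε * (v n + c * u n) := by
          grw [hv_succ, hdn, hen, hu_succ]
      _ = (c + δ + ε) * v n + (δ * (c + 1) + ε * c) * u n := by ring
      _ ≤ r * v n + (r * ε) * u n := by gcongr <;> linarith
      _ = r * (v n + ε * u n) := by ring
  refine .trans (.of_bound ε⁻¹ (.of_forall fun n => ?_)) hsum
  have := hu n
  have := hv n
  rw [Real.norm_of_nonneg (by positivity), Real.norm_of_nonneg (by positivity), mul_add,
    inv_mul_cancel_left₀ hε0.ne']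
  exact le_add_of_nonneg_left (by positivity)

theorem exists_gt_mul_lt {a b r : ℝ} (h : a * b < r) : ∃ a' > a, ∃ b' > b, a' * b' < r := by
  contrapose! h
  exact le_mul_of_forall_lt₀ h

namespace GrowthRateLE

theorem mono {E : Type*} [Norm E] {u : ℕ → E} {a b : ℝ} (hu : GrowthRateLE u a) (hab : a ≤ b) :
    GrowthRateLE u b :=
  ⟨hu.nonneg.trans hab, fun _ hr => hu.isBigO (hab.trans_lt hr)⟩

theorem exists_norm_le {E : Type*} [NormedAddCommGroup E] {u : ℕ → E} {c r : ℝ}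
    (hu : GrowthRateLE u c) (hr : c < r) : ∃ C, 0 ≤ C ∧ ∀ n, ‖u n‖ ≤ C * r ^ n := by
  have hr0 : 0 < r := hu.nonneg.trans_lt hr
  obtain ⟨C, hC⟩ := (isBigO_nat_atTop_iff fun n hn => absurd hn (pow_pos hr0 n).ne').mp
    (hu.isBigO hr)
  refine ⟨C, ?_, fun n => ?_⟩
  · simpa using (norm_nonneg _).trans (hC 0)
  · simpa [abs_of_pos hr0] using hC n

theorem mul {R : Type*} [SeminormedRing R] {u v : ℕ → R} {a b : ℝ} (hu : GrowthRateLE u a)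
    (hv : GrowthRateLE v b) : GrowthRateLE (fun n => u n * v n) (a * b) where
  nonneg := mul_nonneg hu.nonneg hv.nonneg
  isBigO r hr := by
    obtain ⟨a', ha, b', hb, hab⟩ := exists_gt_mul_lt hr
    have ha0 := hu.nonneg.trans_lt ha
    have hb0 := hv.nonneg.trans_lt hb
    refine ((hu.isBigO ha).mul (hv.isBigO hb)).trans (.of_norm_le fun n => ?_)
    rw [← mul_pow, Real.norm_of_nonneg (by positivity)]
    gcongr

theorem comp_add_left {E : Type*} [Norm E] {u : ℕ → E} {c : ℝ} (hu : GrowthRateLE u c) (m : ℕ) :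
    GrowthRateLE (fun n => u (m + n)) c where
  nonneg := hu.nonneg
  isBigO r hr := by
    have hshift := tendsto_atTop_mono (Nat.le_add_left · m) tendsto_id
    refine ((hu.isBigO hr).comp_tendsto hshift).trans ?_
    simpa only [Function.comp_def, pow_add] using isBigO_const_mul_self (r ^ m) _ _

theorem summable {E : Type*} [SeminormedAddCommGroup E] [CompleteSpace E] {u : ℕ → E} {c : ℝ}
    (hu : GrowthRateLE u c) (hc : c < 1) : Summable u := by
  obtain ⟨r, hcr, hr⟩ := exists_between hc
  exact summable_of_isBigO_nat
    (summable_geometric_of_lt_one (hu.nonneg.trans hcr.le) hr) (hu.isBigO hcr)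

theorem summable_prod_mul_mul_add {R : Type*} [NormedRing R] [CompleteSpace R] {f g h : ℕ → R}
    {b c : ℝ} (hf : GrowthRateLE f b) (hg : GrowthRateLE g b) (hh : GrowthRateLE h c)
    (hbc : b * c < 1) : Summable fun p : ℕ × ℕ => f p.1 * g p.2 * h (p.1 + p.2) := by
  obtain ⟨s, hs, r, hr, hsr⟩ := exists_gt_mul_lt hbc
  have hs0 : 0 < s := hf.nonneg.trans_lt hs
  have hr0 : 0 < r := hh.nonneg.trans_lt hr
  obtain ⟨Cf, hCf, hf⟩ := hf.exists_norm_le hs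
  obtain ⟨Cg, hCg, hg⟩ := hg.exists_norm_le hs
  obtain ⟨Ch, -, hh⟩ := hh.exists_norm_le hr
  have hgeom := summable_geometric_of_lt_one (mul_pos hs0 hr0).le hsr
  refine .of_norm_bounded
    ((hgeom.mul_of_nonneg hgeom (fun n => by positivity) fun n => by positivity).mul_left
      (Cf * Cg * Ch)) fun p => ?_
  calc ‖f p.1 * g p.2 * h (p.1 + p.2)‖
      ≤ ‖f p.1‖ * ‖g p.2‖ * ‖h (p.1 + p.2)‖ := norm_mul₃_le
    _ ≤ Cf * s ^ p.1 * (Cg * s ^ p.2) * (Ch * r ^ (p.1 + p.2)) := by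
        gcongr
        exacts [hf _, hg _, hh _]
    _ = Cf * Cg * Ch * ((s * r) ^ p.1 * (s * r) ^ p.2) := by ring

theorem of_succ_eq_mul {R : Type*} [SeminormedRing R] {u a : ℕ → R} {l : R}
    (ha : Tendsto a atTop (𝓝 l)) (hu : ∀ n, u (n + 1) = a n * u n) : GrowthRateLE u ‖l‖ where
  nonneg := norm_nonneg l
  isBigO r hr := by
    refine isBigO_pow_of_eventually_norm_succ_le ((norm_nonneg l).trans_lt hr) ?_
    filter_upwards [ha.norm.eventually_le_const hr] with n hn
    rw [hu]
    exact (norm_mul_le _ _).trans (by gcongr)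

/-- A form of Poincaré's theorem on linear recurrences whose coefficients converge: `z` and `w` are
the roots of the limiting characteristic polynomial. -/
theorem of_add_two_eq {R : Type*} [SeminormedRing R] {u a b : ℕ → R} {z w : R} {c : ℝ}
    (hz : ‖z‖ ≤ c) (hw : ‖w‖ ≤ c) (ha : Tendsto a atTop (𝓝 (z + w)))
    (hb : Tendsto b atTop (𝓝 (-(w * z))))
    (hu : ∀ n, u (n + 2) = a n * u (n + 1) + b n * u n) : GrowthRateLE u c where
  nonneg := (norm_nonneg z).trans hz
  isBigO r hr := by
    set v : ℕ → R := fun n => u (n + 1) - z * u n with hv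
    have hv_succ (n : ℕ) :
        v (n + 1) = w * v n + (a n - (z + w)) * u (n + 1) + (b n - -(w * z)) * u n := by
      simp only [hv, hu]
      noncomm_ring
    refine isBigO_norm_left.mp (isBigO_pow_of_coupled_le (fun n => norm_nonneg (u n))
      (fun n => norm_nonneg (v n)) ((norm_nonneg z).trans hz) hr
      (tendsto_iff_norm_sub_tendsto_zero.mp ha) (tendsto_iff_norm_sub_tendsto_zero.mp hb)
      (fun n => ?_) fun n => ?_)
    · calc ‖u (n + 1)‖ = ‖v n + z * u n‖ := by simp [hv]
        _ ≤ ‖v n‖ + ‖z‖ * ‖u n‖ := norm_add_le_of_le le_rfl (norm_mul_le _ _)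
        _ ≤ ‖v n‖ + c * ‖u n‖ := by gcongr
    · rw [hv_succ]
      refine norm_add_le_of_le (norm_add_le_of_le ?_ (norm_mul_le _ _)) (norm_mul_le _ _)
      exact (norm_mul_le _ _).trans (by gcongr)

end GrowthRateLE

end GrowthRate

section PowerSeries

theorem eq_C_of_rescale_eq {R : Type*} [CommRing R] [NoZeroDivisors R] {q : R}
    (hq : ∀ n ≠ 0, q ^ n ≠ 1) {F : R⟦X⟧} (hF : rescale q F = F) : F = C (constantCoeff F) := by
  ext n
  rcases eq_or_ne n 0 with rfl | hn
  · simp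
  · have h : (q ^ n - 1) * coeff n F = 0 := by
      rw [sub_mul, one_mul, ← coeff_rescale, hF, sub_self]
    rw [coeff_C, if_neg hn]
    exact (mul_eq_zero.mp h).resolve_left (sub_ne_zero.mpr (hq n hn))

theorem hasSum_coeff_mul_tsum_of_mul_eq_one {𝕜 : Type*} [NormedField 𝕜] [CompleteSpace 𝕜]
    {F G : 𝕜⟦X⟧} (hFG : F * G = 1) {h : ℕ → 𝕜}
    (hS : Summable fun p : ℕ × ℕ => coeff p.1 F * coeff p.2 G * h (p.1 + p.2)) :
    HasSum (fun m => coeff m F * ∑' n, coeff n G * h (m + n)) (h 0) := by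
  have hdiag (N : ℕ) : ∑ p ∈ antidiagonal N, coeff p.1 F * coeff p.2 G * h (p.1 + p.2) =
      if N = 0 then h 0 else 0 := by
    calc ∑ p ∈ antidiagonal N, coeff p.1 F * coeff p.2 G * h (p.1 + p.2)
        = coeff N (F * G) * h N := by
          rw [coeff_mul, sum_mul]
          exact sum_congr rfl fun p hp => by rw [mem_antidiagonal.mp hp]
      _ = if N = 0 then h 0 else 0 := by
          rw [hFG, coeff_one]
          split_ifs with hN <;> simp [hN]
  have hsigma := (HasAntidiagonal.sigmaAntidiagonalEquivProd.hasSum_iff.mpr hS.hasSum).sigma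
    fun N => Finset.hasSum (antidiagonal N) fun p => coeff p.1 F * coeff p.2 G * h (p.1 + p.2)
  simp only [hdiag] at hsigma
  rw [← hsigma.unique (hasSum_ite_eq 0 (h 0))]
  simpa only [mul_assoc, tsum_mul_left] using
    hS.hasSum.prod_fiberwise fun m => (hS.prod_factor m).hasSum

end PowerSeries

section QIntegers

variable {q : ℝ}

theorem one_sub_mul_qInt (q : ℝ) (n : ℕ) : (1 - q) * qInt q n = 1 - q ^ n :=
  mul_neg_geom_sum q n

theorem qInt_zero (q : ℝ) : qInt q 0 = 0 :=
  sum_range_zero _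

theorem qInt_add (q : ℝ) (m n : ℕ) : qInt q (m + n) = qInt q m + q ^ m * qInt q n := by
  simp only [qInt, sum_range_add, mul_sum, pow_add]

theorem pow_ne_one_of_abs_lt_one (hq : |q| < 1) {n : ℕ} (hn : n ≠ 0) : q ^ n ≠ 1 := by
  intro h
  have := pow_lt_one₀ (abs_nonneg q) hq hn
  rw [← abs_pow, h, abs_one] at this
  exact this.false

theorem qInt_ne_zero (hq : |q| < 1) {n : ℕ} (hn : n ≠ 0) : qInt q n ≠ 0 := by
  refine right_ne_zero_of_mul (a := 1 - q) ?_
  rw [one_sub_mul_qInt]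
  exact sub_ne_zero.mpr (pow_ne_one_of_abs_lt_one hq hn).symm

theorem tendsto_qInt (hq : |q| < 1) : Tendsto (qInt q) atTop (𝓝 (1 - q)⁻¹) :=
  (hasSum_geometric_of_abs_lt_one hq).tendsto_sum_nat

theorem qFact_succ (q : ℝ) (n : ℕ) : qFact q (n + 1) = qFact q n * qInt q (n + 1) :=
  prod_range_succ _ n

theorem qFact_ne_zero (hq : |q| < 1) (n : ℕ) : qFact q n ≠ 0 :=
  prod_ne_zero_iff.mpr fun j _ => qInt_ne_zero hq j.succ_ne_zero

theorem growthRateLE_inv_qFact (hq : |q| < 1) : GrowthRateLE (fun n => (qFact q n)⁻¹) (1 - q) := by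
  have hq1 : 0 < 1 - q := sub_pos.mpr (abs_lt.mp hq).2
  have hlim := ((tendsto_qInt hq).comp (tendsto_add_atTop_nat 1)).inv₀ (inv_ne_zero hq1.ne')
  rw [inv_inv] at hlim
  simpa only [Real.norm_of_nonneg hq1.le] using GrowthRateLE.of_succ_eq_mul hlim fun n => by
    rw [qFact_succ, mul_inv_rev, Function.comp_apply]

theorem qPoch_succ (a q : ℝ) (n : ℕ) : qPoch a q (n + 1) = qPoch a q n * (1 - a * q ^ n) :=
  prod_range_succ _ n

theorem qPoch_ne_zero {a : ℝ} (ha : |a| < 1) (hq : |q| < 1) (n : ℕ) : qPoch a q n ≠ 0 := by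
  refine prod_ne_zero_iff.mpr fun j _ => sub_ne_zero.mpr fun h => ?_
  have : |a * q ^ j| < 1 := by
    rw [abs_mul, abs_pow]
    exact mul_lt_one_of_nonneg_of_lt_one_left (abs_nonneg a) ha (pow_le_one₀ (abs_nonneg q) hq.le)
  rw [← h, abs_one] at this
  exact this.false

end QIntegers

section Hermite

variable {q : ℝ}

/-- At `n = 0` the truncated index `n - 1` is harmless because `[0]_q = 0`. -/
theorem qHermite_succ (q x : ℝ) (n : ℕ) :
    qHermite q (n + 1) x = x * qHermite q n x - qInt q n * qHermite q (n - 1) x := by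
  cases n with
  | zero => simp [qHermite, qInt_zero]
  | succ n => rw [qHermite, Nat.add_sub_cancel]

theorem exists_complex_add_conj_eq_mul_conj_eq {s p : ℝ} (h : s ^ 2 ≤ 4 * p) :
    ∃ z : ℂ, z + conj z = s ∧ z * conj z = p := by
  refine ⟨⟨s / 2, √(p - (s / 2) ^ 2)⟩, ?_, ?_⟩
  · rw [Complex.add_conj]
    push_cast
    ring
  · rw [Complex.mul_conj, Complex.normSq_mk, Real.mul_self_sqrt (by linarith)]
    push_cast
    ring

theorem sq_le_of_mem_Sq {x : ℝ} (hq : q ≤ 1) (hx : x ∈ Sq q) : x ^ 2 ≤ 4 * (1 - q)⁻¹ := by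
  calc x ^ 2 ≤ (2 / √(1 - q)) ^ 2 := sq_le_sq' hx.1 hx.2
    _ = 4 * (1 - q)⁻¹ := by
      rw [div_pow, Real.sq_sqrt (sub_nonneg.mpr hq)]
      ring

theorem growthRateLE_qHermite {x : ℝ} (hq : |q| < 1) (hx : x ∈ Sq q) :
    GrowthRateLE (fun n => qHermite q n x) √(1 - q)⁻¹ := by
  obtain ⟨z, hsum, hprod⟩ :=
    exists_complex_add_conj_eq_mul_conj_eq (sq_le_of_mem_Sq (abs_lt.mp hq).2.le hx)
  have hz : ‖z‖ = √(1 - q)⁻¹ := by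
    rw [Complex.mul_conj] at hprod
    rw [Complex.norm_def, Complex.ofReal_injective hprod]
  have hcoeff : Tendsto (fun n => -(qInt q (n + 1) : ℂ)) atTop (𝓝 (-(conj z * z))) := by
    rw [mul_comm, hprod]
    exact ((Complex.continuous_ofReal.tendsto _).comp
      ((tendsto_qInt hq).comp (tendsto_add_atTop_nat 1))).neg
  have h := GrowthRateLE.of_add_two_eq (u := fun n => (qHermite q n x : ℂ)) (a := fun _ => x) hz.le
    ((Complex.norm_conj z).trans hz).le (hsum ▸ tendsto_const_nhds) hcoeff fun n => by
      rw [qHermite]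
      push_cast
      ring
  exact ⟨h.nonneg, fun r hr => Complex.isBigO_ofReal_left.mp (h.isBigO hr)⟩

theorem growthRateLE_qB (hq : |q| < 1) (y : ℝ) : GrowthRateLE (fun n => qB q n y) 0 := by
  have hpow := tendsto_pow_atTop_nhds_zero_of_abs_lt_one hq
  have hshift := tendsto_add_atTop_nat 1
  refine GrowthRateLE.of_add_two_eq (z := 0) (w := 0) (a := fun n => -q ^ (n + 1) * y)
    (b := fun n => q ^ n * qInt q (n + 1)) (by simp) (by simp) ?_ ?_ fun n => by rw [qB]
  · simpa using (hpow.comp hshift).neg.mul_const y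
  · simpa using hpow.mul ((tendsto_qInt hq).comp hshift)

/-- The generating function `∑ Hₙ(y|q) tⁿ / [n]_q!`. -/
def qHermiteGenFun (q y : ℝ) : ℝ⟦X⟧ :=
  .mk fun n => qHermite q n y / qFact q n

/-- The generating function `∑ Bₙ(y|q) tⁿ / [n]_q!`. -/
def qBGenFun (q y : ℝ) : ℝ⟦X⟧ :=
  .mk fun n => qB q n y / qFact q n

/-- The polynomial `1 - (1 - q) y t + (1 - q) t²` in `t`, which is `V₀(y,t|q)`. -/
def qHermiteFactor (q y : ℝ) : ℝ⟦X⟧ :=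
  1 - C ((1 - q) * y) * X + C (1 - q) * X ^ 2

theorem coeff_zero_qHermiteFactor_mul (q y : ℝ) (F : ℝ⟦X⟧) :
    coeff 0 (qHermiteFactor q y * F) = coeff 0 F := by
  simp [qHermiteFactor]

theorem coeff_one_qHermiteFactor_mul (q y : ℝ) (F : ℝ⟦X⟧) :
    coeff 1 (qHermiteFactor q y * F) = coeff 1 F - (1 - q) * y * coeff 0 F := by
  simp [qHermiteFactor, add_mul, sub_mul, mul_assoc, coeff_succ_X_mul 0, coeff_X_pow_mul']

theorem coeff_add_two_qHermiteFactor_mul (q y : ℝ) (F : ℝ⟦X⟧) (n : ℕ) :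
    coeff (n + 2) (qHermiteFactor q y * F) =
      coeff (n + 2) F - (1 - q) * y * coeff (n + 1) F + (1 - q) * coeff n F := by
  simp [qHermiteFactor, add_mul, sub_mul, mul_assoc, coeff_succ_X_mul, coeff_X_pow_mul']

theorem rescale_qHermiteGenFun (hq : |q| < 1) (y : ℝ) :
    rescale q (qHermiteGenFun q y) = qHermiteFactor q y * qHermiteGenFun q y := by
  ext n
  match n with
  | 0 => rw [coeff_zero_qHermiteFactor_mul, coeff_rescale, pow_zero, one_mul]
  | 1 =>
    rw [coeff_rescale, coeff_one_qHermiteFactor_mul]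
    simp [qHermiteGenFun, qHermite, qFact, qInt]
    ring
  | n + 2 =>
    rw [coeff_rescale, coeff_add_two_qHermiteFactor_mul]
    simp only [qHermiteGenFun, coeff_mk, qFact_succ, qHermite]
    have h0 := qFact_ne_zero hq n
    have h1 := qInt_ne_zero hq n.succ_ne_zero
    have h2 := qInt_ne_zero hq (n + 1).succ_ne_zero
    field_simp
    linear_combination
      (y * qHermite q (n + 1) y - qInt q (n + 1) * qHermite q n y) * one_sub_mul_qInt q (n + 2)

theorem qBGenFun_eq_qHermiteFactor_mul_rescale (hq : |q| < 1) (y : ℝ) :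
    qBGenFun q y = qHermiteFactor q y * rescale q (qBGenFun q y) := by
  ext n
  match n with
  | 0 => rw [coeff_zero_qHermiteFactor_mul, coeff_rescale, pow_zero, one_mul]
  | 1 =>
    rw [coeff_one_qHermiteFactor_mul]
    simp only [coeff_rescale, qBGenFun, coeff_mk]
    simp [qB, qFact, qInt]
    ring
  | n + 2 =>
    rw [coeff_add_two_qHermiteFactor_mul]
    simp only [coeff_rescale, qBGenFun, coeff_mk, qFact_succ, qB]
    have h0 := qFact_ne_zero hq n
    have h1 := qInt_ne_zero hq n.succ_ne_zero
    have h2 := qInt_ne_zero hq (n + 1).succ_ne_zero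
    field_simp
    linear_combination (q ^ (n + 1) * y * qB q (n + 1) y - q ^ n * qInt q (n + 1) * qB q n y) *
      one_sub_mul_qInt q (n + 2)

theorem qBGenFun_mul_qHermiteGenFun (hq : |q| < 1) (y : ℝ) :
    qBGenFun q y * qHermiteGenFun q y = 1 := by
  have hinv : rescale q (qBGenFun q y * qHermiteGenFun q y) =
      qBGenFun q y * qHermiteGenFun q y := by
    rw [map_mul, rescale_qHermiteGenFun hq]
    nth_rw 2 [qBGenFun_eq_qHermiteFactor_mul_rescale hq]
    ring
  rw [eq_C_of_rescale_eq (fun n hn => pow_ne_one_of_abs_lt_one hq hn) hinv]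
  simp [qBGenFun, qHermiteGenFun, qB, qHermite, qFact]

end Hermite

section PoissonMehler

variable {q ρ x y : ℝ}

/-- The `n`-th term `ρⁿ / [n]_q! Hₙ(y|q) Hₘ₊ₙ(x|q)` of the Poisson–Mehler series shifted by `m`. -/
def mehlerTerm (q ρ x y : ℝ) (m n : ℕ) : ℝ :=
  coeff n (rescale ρ (qHermiteGenFun q y)) * qHermite q (m + n) x

/-- The shifted Poisson–Mehler sum `∑ₙ ρⁿ / [n]_q! Hₙ(y|q) Hₘ₊ₙ(x|q)`. -/
def mehlerSum (q ρ x y : ℝ) (m : ℕ) : ℝ :=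
  ∑' n, mehlerTerm q ρ x y m n

theorem qInt_succ_mul_coeff_rescale_qHermiteGenFun (hq : |q| < 1) (ρ y : ℝ) (n : ℕ) :
    qInt q (n + 1) * coeff (n + 1) (rescale ρ (qHermiteGenFun q y)) =
      ρ * y * coeff n (rescale ρ (qHermiteGenFun q y)) -
        ρ ^ 2 * coeff n (X * rescale ρ (qHermiteGenFun q y)) := by
  have hn := qInt_ne_zero hq n.succ_ne_zero
  have hF := qFact_ne_zero hq n
  cases n with
  | zero =>
    simp [coeff_rescale, qHermiteGenFun, qHermite, qFact, qInt]
  | succ n =>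
    have := qInt_ne_zero hq n.succ_ne_zero
    have := qFact_ne_zero hq n
    simp only [coeff_succ_X_mul, coeff_rescale, qHermiteGenFun, coeff_mk, qFact_succ, qHermite]
    field_simp
    ring

theorem hasSum_qInt_succ_mul_mehlerTerm (hq : |q| < 1)
    (hS : ∀ m, Summable (mehlerTerm q ρ x y m)) (m : ℕ) :
    HasSum (fun n => qInt q (n + 1) * coeff (n + 1) (rescale ρ (qHermiteGenFun q y)) *
      qHermite q (m + n) x) (ρ * y * mehlerSum q ρ x y m - ρ ^ 2 * mehlerSum q ρ x y (m + 1)) := by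
  have hX : HasSum (fun n => coeff n (X * rescale ρ (qHermiteGenFun q y)) * qHermite q (m + n) x)
      (mehlerSum q ρ x y (m + 1)) := by
    rw [← hasSum_nat_add_iff' 1, sum_range_one, coeff_zero_X_mul, zero_mul, sub_zero]
    refine (hS (m + 1)).hasSum.congr_fun fun n => ?_
    rw [coeff_succ_X_mul, mehlerTerm, add_right_comm, add_assoc]
  refine (((hS m).hasSum.mul_left (ρ * y)).sub (hX.mul_left (ρ ^ 2))).congr_fun fun n => ?_
  rw [qInt_succ_mul_coeff_rescale_qHermiteGenFun hq, mehlerTerm]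
  ring

theorem mehlerSum_succ (hq : |q| < 1) (hS : ∀ m, Summable (mehlerTerm q ρ x y m)) (m : ℕ) :
    (1 - ρ ^ 2 * q ^ m) * mehlerSum q ρ x y (m + 1) =
      (x - ρ * y * q ^ m) * mehlerSum q ρ x y m - qInt q m * mehlerSum q ρ x y (m - 1) := by
  set g : ℕ → ℝ := fun n => coeff n (rescale ρ (qHermiteGenFun q y))
  have hlower : HasSum (fun n => qInt q n * g n * qHermite q (m + n - 1) x)
      (ρ * y * mehlerSum q ρ x y m - ρ ^ 2 * mehlerSum q ρ x y (m + 1)) := by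
    rw [← hasSum_nat_add_iff' 1, sum_range_one, qInt_zero, zero_mul, zero_mul, sub_zero]
    exact hasSum_qInt_succ_mul_mehlerTerm hq hS m
  have hterm (n : ℕ) : mehlerTerm q ρ x y (m + 1) n = x * mehlerTerm q ρ x y m n -
      qInt q m * mehlerTerm q ρ x y (m - 1) n -
        q ^ m * (qInt q n * g n * qHermite q (m + n - 1) x) := by
    have hpred : qInt q m * qHermite q (m - 1 + n) x = qInt q m * qHermite q (m + n - 1) x := by
      cases m with
      | zero => simp [qInt_zero]
      | succ m => rw [Nat.add_sub_cancel, Nat.add_right_comm, Nat.add_sub_cancel]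
    simp only [mehlerTerm]
    rw [Nat.add_right_comm, qHermite_succ, qInt_add]
    linear_combination (g n) * hpred
  have hsum := ((((hS m).hasSum.mul_left x).sub ((hS (m - 1)).hasSum.mul_left (qInt q m))).sub
    (hlower.mul_left (q ^ m))).congr_fun hterm
  have hrec : mehlerSum q ρ x y (m + 1) = x * mehlerSum q ρ x y m -
      qInt q m * mehlerSum q ρ x y (m - 1) -
        q ^ m * (ρ * y * mehlerSum q ρ x y m - ρ ^ 2 * mehlerSum q ρ x y (m + 1)) :=
    (hS (m + 1)).hasSum.unique hsum
  linear_combination hrec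

theorem qPoch_mul_mehlerSum (hq : |q| < 1) (hS : ∀ m, Summable (mehlerTerm q ρ x y m)) (m : ℕ) :
    qPoch (ρ ^ 2) q m * mehlerSum q ρ x y m = mehlerSum q ρ x y 0 * ASC q y ρ m x := by
  induction m using Nat.twoStepInduction with
  | zero => simp [qPoch, ASC]
  | one =>
    have hrec := mehlerSum_succ hq hS 0
    simp only [qInt_zero] at hrec
    simp only [qPoch, ASC, prod_range_one]
    linear_combination hrec
  | more m ih₀ ih₁ =>
    have hrec := mehlerSum_succ hq hS (m + 1)
    rw [Nat.add_sub_cancel] at hrec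
    rw [qPoch_succ] at ih₁
    rw [ASC, qPoch_succ, qPoch_succ]
    linear_combination qPoch (ρ ^ 2) q m * (1 - ρ ^ 2 * q ^ m) * hrec +
      (x - ρ * y * q ^ (m + 1)) * ih₁ - (1 - ρ ^ 2 * q ^ m) * qInt q (m + 1) * ih₀

theorem growthRateLE_coeff_rescale_mk_div_qFact {u : ℕ → ℝ} {c : ℝ} (hq : |q| < 1)
    (hu : GrowthRateLE u c) (ρ : ℝ) :
    GrowthRateLE (fun n => coeff n (rescale ρ (.mk fun n => u n / qFact q n)))
      (|ρ| * (c * (1 - q))) := by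
  have hpow : GrowthRateLE (fun n => ρ ^ n) |ρ| :=
    GrowthRateLE.of_succ_eq_mul tendsto_const_nhds fun n => pow_succ' ρ n
  simpa only [coeff_rescale, coeff_mk, div_eq_mul_inv] using
    hpow.mul (hu.mul (growthRateLE_inv_qFact hq))

theorem summable_mehlerTerm {a b : ℝ} (hq : |q| < 1)
    (hx : GrowthRateLE (fun n => qHermite q n x) a) (hy : GrowthRateLE (fun n => qHermite q n y) b)
    (hab : |ρ| * (b * (1 - q)) * a < 1) (m : ℕ) : Summable (mehlerTerm q ρ x y m) :=
  ((growthRateLE_coeff_rescale_mk_div_qFact hq hy ρ).mul (hx.comp_add_left m)).summable hab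

theorem hasSum_qB_mul_mehlerSum {a b : ℝ} (hq : |q| < 1)
    (hx : GrowthRateLE (fun n => qHermite q n x) a) (hy : GrowthRateLE (fun n => qHermite q n y) b)
    (hab : |ρ| * (b * (1 - q)) * a < 1) :
    HasSum (fun m => coeff m (rescale ρ (qBGenFun q y)) * mehlerSum q ρ x y m) 1 := by
  have hinv : rescale ρ (qBGenFun q y) * rescale ρ (qHermiteGenFun q y) = 1 := by
    rw [← map_mul, qBGenFun_mul_qHermiteGenFun hq, map_one]
  set F := rescale ρ (qBGenFun q y)
  set G := rescale ρ (qHermiteGenFun q y)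
  have hG : GrowthRateLE (fun n => coeff n G) (|ρ| * (b * (1 - q))) :=
    growthRateLE_coeff_rescale_mk_div_qFact hq hy ρ
  have hF : GrowthRateLE (fun n => coeff n F) (|ρ| * (b * (1 - q))) :=
    (growthRateLE_coeff_rescale_mk_div_qFact hq (growthRateLE_qB hq y) ρ).mono
      (by simpa using hG.nonneg)
  have hS := hF.summable_prod_mul_mul_add hG hx hab
  have h := hasSum_coeff_mul_tsum_of_mul_eq_one hinv (h := fun n => qHermite q n x) hS
  rwa [qHermite] at h

theorem poisson_mehler_reciprocal_general {a b : ℝ} (hq : |q| < 1) (hρ : |ρ| < 1)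
    (hx : GrowthRateLE (fun n => qHermite q n x) a) (hy : GrowthRateLE (fun n => qHermite q n y) b)
    (hab : |ρ| * (b * (1 - q)) * a < 1) :
    (∑' n : ℕ, ρ ^ n / qFact q n * qHermite q n x * qHermite q n y) ≠ 0 ∧
    HasSum (fun n : ℕ => ρ ^ n / (qPoch (ρ ^ 2) q n * qFact q n) * qB q n y * ASC q y ρ n x)
      (∑' n : ℕ, ρ ^ n / qFact q n * qHermite q n x * qHermite q n y)⁻¹ := by
  have hkernel : ∑' n : ℕ, ρ ^ n / qFact q n * qHermite q n x * qHermite q n y =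
      mehlerSum q ρ x y 0 := by
    refine tsum_congr fun n => ?_
    rw [mehlerTerm, coeff_rescale, qHermiteGenFun, coeff_mk, zero_add]
    ring
  have hmul : HasSum (fun n => mehlerSum q ρ x y 0 *
      (ρ ^ n / (qPoch (ρ ^ 2) q n * qFact q n) * qB q n y * ASC q y ρ n x)) 1 := by
    refine (hasSum_qB_mul_mehlerSum hq hx hy hab).congr_fun fun n => ?_
    have hρ2 : |ρ ^ 2| < 1 := by simpa using hρ
    have hP := qPoch_ne_zero hρ2 hq n
    have hF := qFact_ne_zero hq n
    have hcarlitz := qPoch_mul_mehlerSum hq (summable_mehlerTerm hq hx hy hab) n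
    rw [coeff_rescale, qBGenFun, coeff_mk]
    field_simp
    linear_combination (-(ρ ^ n * qB q n y)) * hcarlitz
  have hne : mehlerSum q ρ x y 0 ≠ 0 := fun h => by simpa [h] using hmul.tsum_eq
  rw [hkernel]
  exact ⟨hne, by simpa [hne] using hmul.mul_left (mehlerSum q ρ x y 0)⁻¹⟩

end PoissonMehler

/-- reciprocal of the Poisson–Mehler kernel. -/
theorem poisson_mehler_reciprocal (q ρ x y : ℝ) (hq : |q| < 1) (hρ : |ρ| < 1)
    (hx : x ∈ Sq q) (hy : y ∈ Sq q) :
    (∑' n : ℕ, ρ ^ n / qFact q n * qHermite q n x * qHermite q n y) ≠ 0 ∧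
    HasSum (fun n : ℕ => ρ ^ n / (qPoch (ρ ^ 2) q n * qFact q n) *
        qB q n y * ASC q y ρ n x)
      (∑' n : ℕ, ρ ^ n / qFact q n * qHermite q n x * qHermite q n y)⁻¹ := by
  have hq1 : 0 < 1 - q := sub_pos.mpr (abs_lt.mp hq).2
  refine poisson_mehler_reciprocal_general hq hρ (growthRateLE_qHermite hq hx)
    (growthRateLE_qHermite hq hy) ?_
  calc |ρ| * (√(1 - q)⁻¹ * (1 - q)) * √(1 - q)⁻¹
      = |ρ| * (√(1 - q)⁻¹ * √(1 - q)⁻¹ * (1 - q)) := by ring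
    _ = |ρ| := by rw [Real.mul_self_sqrt (inv_nonneg.mpr hq1.le), inv_mul_cancel₀ hq1.ne', mul_one]
    _ < 1 := hρ
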